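/- Let 2 ≤ M_T ≤ M_R, let P > 0, let μ be the probability measure on real M_R × M_T matrices with i.i.d. standard normal entries and let μ̃ be the probability measure on real (M_R − M_T + 2) × 2 matrices with i.i.d. standard normal entries. Let ã ∈ ℝ² be nonzero and let a ∈ ℝ^{M_T} be obtained from ã by placing its two entries in two consecutive coordinates and zeros elsewhere (so ‖a‖ = ‖ã‖). Then the pushforward of μ under H ↦ LB(H,a) = P/(aᵀ(HᵀH)⁻¹a) equals the pushforward of μ̃ under H̃ ↦ LB(H̃,ã) = P/(ãᵀ(H̃ᵀH̃)⁻¹ã); that is, the two lower bounds on effective SNR are identically distributed. -/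

import Mathlib

open Matrix MeasureTheory ProbabilityTheory

/-!
For an `n × (k + 1)` standard Gaussian matrix `H` and any `a`, the variable
`P / (aᵀ (Hᵀ H)⁻¹ a)` has the law of `P / (‖a‖² / ‖X‖²)` with `X` standard Gaussian in
`ℝ^(n - k)` (`map_LB_eq`). This law depends only on `n - k`, `‖a‖` and `P`, and these agree for
the two channels in the theorem: `n - k` is `M_R - M_T + 1` for both.

To prove `map_LB_eq`, rotate the rows of `H` by an orthogonal matrix taking `a` to `‖a‖ e₀`; the
law of `H` is unchanged, so only the entry `((Hᵀ H)⁻¹)₀₀` matters. Here `Hᵀ H` is the Gram matrix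
of the columns, and the inverse of that entry is the squared distance from column `0` to the span
`W` of the other columns (`gram_inv_zero_zero`). Conditionally on the other columns, which are
almost surely linearly independent (`ae_linearIndependent`), the projection of column `0` to `Wᗮ`
is standard Gaussian in dimension `n - k`, so the conditional law does not depend on `W`
(`map_norm_sq_projection`), and it is also the unconditional one (`map_prod_eq_of_ae`).
-/

lemma stdGaussian_map_orthogonalProjectionOnto {E : Type*} [NormedAddCommGroup E]
    [InnerProductSpace ℝ E] [FiniteDimensional ℝ E] [MeasurableSpace E] [BorelSpace E]
    (K : Submodule ℝ E) :
    (stdGaussian E).map K.orthogonalProjectionOnto = stdGaussian K := by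
  have : IsProbabilityMeasure ((stdGaussian E).map K.orthogonalProjectionOnto) :=
    Measure.isProbabilityMeasure_map (by fun_prop)
  apply Measure.ext_of_charFun
  ext t
  have h := charFun_stdGaussian (t : E)
  rw [charFun_apply] at h
  rw [charFun_stdGaussian, charFun_apply, integral_map (by fun_prop) (by fun_prop)]
  simpa using h

lemma map_norm_sq_projection {E : Type*} [NormedAddCommGroup E]
    [InnerProductSpace ℝ E] [FiniteDimensional ℝ E] [MeasurableSpace E] [BorelSpace E]
    (K : Submodule ℝ E) {d : ℕ} (hd : Module.finrank ℝ K = d) :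
    (stdGaussian E).map (fun x => ‖K.starProjection x‖ ^ 2) =
      (stdGaussian (EuclideanSpace ℝ (Fin d))).map (fun x => ‖x‖ ^ 2) := by
  subst hd
  rw [← stdGaussian_map (stdOrthonormalBasis ℝ K).repr,
    ← stdGaussian_map_orthogonalProjectionOnto K, Measure.map_map (by fun_prop) (by fun_prop),
    Measure.map_map (by fun_prop) (by fun_prop)]
  congr 1
  ext x
  simp 

/-- A proper subspace is null: it lies in the kernel of a nonzero functional, whose law is a
nondegenerate Gaussian on `ℝ`. -/
lemma stdGaussian_submodule {E : Type*} [NormedAddCommGroup E]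
    [InnerProductSpace ℝ E] [FiniteDimensional ℝ E] [MeasurableSpace E] [BorelSpace E]
    (W : Submodule ℝ E) (hW : W ≠ ⊤) : stdGaussian E W = 0 := by
  obtain ⟨v, hv, hv0⟩ := (Submodule.ne_bot_iff _).1 (mt Submodule.orthogonal_eq_bot_iff.1 hW)
  have hL := IsGaussian.map_eq_gaussianReal (μ := stdGaussian E) (innerSL ℝ v)
  rw [variance_dual_stdGaussian] at hL
  have hne : (‖innerSL ℝ v‖ ^ 2).toNNReal ≠ 0 := by
    simp [hv0]
  have := nullSingletonClass_gaussianReal (μ := (stdGaussian E)[innerSL ℝ v]) hne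
  have h0 : (stdGaussian E).map (innerSL ℝ v) {0} = 0 := by
    rw [hL]; exact measure_singleton _
  rw [Measure.map_apply (by fun_prop) (measurableSet_singleton _)] at h0
  refine measure_mono_null (fun w hw => ?_) h0
  simpa [real_inner_comm] using (Submodule.mem_orthogonal _ _).1 hv w hw

lemma measurable_fin_cons {E : Type*} [MeasurableSpace E] {k : ℕ} :
    Measurable fun p : E × (Fin k → E) => (Fin.cons p.1 p.2 : Fin (k + 1) → E) := by
  refine measurable_pi_iff.2 fun i => ?_
  refine Fin.cases ?_ (fun i => ?_) i
  · simpa using measurable_fst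
  · simp only [Fin.cons_succ]
    fun_prop

lemma ae_linearIndependent {E : Type*} [NormedAddCommGroup E]
    [InnerProductSpace ℝ E] [FiniteDimensional ℝ E] [MeasurableSpace E] [BorelSpace E]
    (k : ℕ) (hk : k ≤ Module.finrank ℝ E) :
    ∀ᵐ c ∂(Measure.pi fun _ : Fin k => stdGaussian E), LinearIndependent ℝ c := by
  induction k with
  | zero => exact .of_forall fun c => linearIndependent_empty_type
  | succ k ih =>
    have ih := ih (by omega)
    have hmp := measurePreserving_piFinSuccAbove (fun _ : Fin (k + 1) => stdGaussian E) 0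
    have hmeas : MeasurableSet {p : E × (Fin k → E) | LinearIndependent ℝ (Fin.cons p.1 p.2 : Fin (k + 1) → E)} := by
      have : IsOpen {c : Fin (k + 1) → E | LinearIndependent ℝ c} := isOpen_setOfPred_linearIndependent
      exact this.measurableSet.preimage measurable_fin_cons
    have key : ∀ᵐ p ∂((stdGaussian E).prod (Measure.pi fun _ : Fin k => stdGaussian E)),
        LinearIndependent ℝ (Fin.cons p.1 p.2 : Fin (k + 1) → E) := by
      rw [Measure.ae_prod_iff_ae_ae hmeas, Measure.ae_ae_comm hmeas]
      filter_upwards [ih] with g hg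
      have hW : Submodule.span ℝ (Set.range g) ≠ ⊤ := by
        intro h
        have := finrank_span_eq_card hg
        rw [h, finrank_top, Fintype.card_fin] at this
        omega
      have h0 := stdGaussian_submodule _ hW
      filter_upwards [measure_eq_zero_iff_ae_notMem.1 h0] with h hh
      exact linearIndependent_finCons.2 ⟨hg, hh⟩
    have := hmp.quasiMeasurePreserving.ae key
    filter_upwards [this] with c hc
    convert hc using 1
    ext i
    refine Fin.cases ?_ (fun i => ?_) i <;> simp [Fin.tail]

/-- The inverse of the first diagonal entry of the inverse Gram matrix of `(h, g₁, …, g_k)` is the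
squared distance from `h` to the span of the `gᵢ`. If `h` lies in that span, the Gram matrix is
singular, its `⁻¹` is `0`, and both sides are `0`. -/
lemma gram_inv_zero_zero {E : Type*} [NormedAddCommGroup E]
    [InnerProductSpace ℝ E] [FiniteDimensional ℝ E] {k : ℕ} (h : E) (g : Fin k → E)
    (hg : LinearIndependent ℝ g) :
    ((gram ℝ (Fin.cons h g : Fin (k + 1) → E))⁻¹ 0 0)⁻¹ =
      ‖(Submodule.span ℝ (Set.range g))ᗮ.starProjection h‖ ^ 2 := by
  set W := Submodule.span ℝ (Set.range g) with hWdef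
  set c : Fin (k + 1) → E := Fin.cons h g with hc
  set w := Wᗮ.starProjection h with hw
  have hwW : w ∈ Wᗮ := Submodule.starProjection_apply_mem _ _
  by_cases hdet : (gram ℝ c).det = 0
  · have hli : ¬ LinearIndependent ℝ c := fun hl =>
      det_gram_ne_zero_iff_linearIndependent.2 hl hdet
    have hhW : h ∈ W := by
      by_contra hn
      exact hli (linearIndependent_finCons.2 ⟨hg, hn⟩)
    have hw0 : w = 0 := by
      rw [hw, Submodule.starProjection_apply_eq_zero_iff]
      simpa using hhW
    rw [nonsing_inv_apply_not_isUnit _ (by simp [hdet])]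
    simp [hw0]
  · obtain ⟨x, hx⟩ : ∃ x : Fin k → ℝ, ∑ i, x i • g i = W.starProjection h :=
      (Submodule.mem_span_range_iff_exists_fun ℝ).1 (Submodule.starProjection_apply_mem W h)
    have hsum : ∑ j, (Fin.cons 1 (-x) : Fin (k + 1) → ℝ) j • c j = w := by
      have : W.starProjection h + w = h := Submodule.starProjection_add_starProjection_orthogonal h
      rw [Fin.sum_univ_succ]
      simp [hc, hx]
      rw [add_neg_eq_iff_eq_add, add_comm, this]
    -- The coefficients `(1, -x)` of the residual `w = h - ∑ xᵢ gᵢ` solve `gram * u = ‖w‖² e₀`.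
    have hmul : gram ℝ c *ᵥ (Fin.cons 1 (-x) : Fin (k + 1) → ℝ) = Pi.single 0 (‖w‖ ^ 2) := by
      have h1 : ∀ i, (gram ℝ c *ᵥ (Fin.cons 1 (-x) : Fin (k + 1) → ℝ)) i = inner ℝ (c i) w := by
        intro i
        rw [← hsum, inner_sum]
        simp only [mulVec, dotProduct, gram_apply, inner_smul_right]
        exact Finset.sum_congr rfl fun _ _ => mul_comm _ _
      ext i
      rw [h1]
      refine Fin.cases ?_ (fun i => ?_) i
      · have : inner ℝ h w = ‖w‖ ^ 2 := by
          have h2 : W.starProjection h + w = h :=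
            Submodule.starProjection_add_starProjection_orthogonal h
          rw [← real_inner_self_eq_norm_sq]
          nth_rw 1 [← h2]
          rw [inner_add_left, (Submodule.mem_orthogonal _ _).1 hwW _
            (Submodule.starProjection_apply_mem W h), zero_add]
        simpa [hc] using this
      · simpa [hc] using (Submodule.mem_orthogonal _ _).1 hwW (g i) (Submodule.subset_span ⟨i, rfl⟩)
    have hu := congrArg (fun v => ((gram ℝ c)⁻¹ *ᵥ v) 0) hmul
    simp only [mulVec_mulVec] at hu
    rw [nonsing_inv_mul _ (Ne.isUnit hdet)] at hu
    simp at hu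
    exact (eq_inv_of_mul_eq_one_right hu.symm).symm

/-- If the conditional law of `F` given the second coordinate is almost surely `ρ`, then `F` has
law `ρ`. -/
lemma map_prod_eq_of_ae {α β γ : Type*} [MeasurableSpace α] [MeasurableSpace β]
    [MeasurableSpace γ] (μ : Measure α) (ν : Measure β) [IsProbabilityMeasure μ]
    [IsProbabilityMeasure ν] (ρ : Measure γ) (F : α × β → γ) (hF : Measurable F)
    (h : ∀ᵐ y ∂ν, μ.map (fun x => F (x, y)) = ρ) : (μ.prod ν).map F = ρ := by
  ext s hs
  rw [Measure.map_apply hF hs, Measure.prod_apply_symm (hF hs)]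
  have : ∀ᵐ y ∂ν, μ ((fun x => (x, y)) ⁻¹' (F ⁻¹' s)) = ρ s := by
    filter_upwards [h] with y hy
    rw [← hy, Measure.map_apply (by fun_prop) hs]
    rfl
  rw [lintegral_congr_ae this]
  simp

lemma measurable_inv_matrix_entry {α : Type*} [MeasurableSpace α] {m : ℕ}
    (A : α → Matrix (Fin m) (Fin m) ℝ) (hA : ∀ i j, Measurable fun x => A x i j) (i j : Fin m) :
    Measurable fun x => (A x)⁻¹ i j := by
  have hdet : ∀ B : α → Matrix (Fin m) (Fin m) ℝ, (∀ i j, Measurable fun x => B x i j) →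
      Measurable fun x => (B x).det := by
    intro B hB
    simp only [det_apply]
    fun_prop
  have hinv : (fun x => (A x)⁻¹ i j) = fun x => (A x).det⁻¹ * (A x).adjugate i j := by
    ext x
    rw [inv_def]
    simp
  rw [hinv]
  refine (hdet A hA).inv.mul ?_
  simp only [adjugate_apply]
  refine hdet _ fun p q => ?_
  by_cases hp : p = j
  · subst hp
    simp
  · simpa [updateRow_ne hp] using hA p q

/-- For `k + 1` independent standard Gaussian vectors in dimension `k + d`, the inverse of the first
diagonal entry of the inverse Gram matrix is `χ²` distributed with `d` degrees of freedom. -/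
lemma map_gram_inv {E : Type*} [NormedAddCommGroup E]
    [InnerProductSpace ℝ E] [FiniteDimensional ℝ E] [MeasurableSpace E] [BorelSpace E]
    {k d : ℕ} (hkd : k + d = Module.finrank ℝ E) :
    (Measure.pi fun _ : Fin (k + 1) => stdGaussian E).map
        (fun c => ((gram ℝ c)⁻¹ 0 0)⁻¹) =
      (stdGaussian (EuclideanSpace ℝ (Fin d))).map (fun x => ‖x‖ ^ 2) := by
  have hmp := (measurePreserving_piFinSuccAbove (fun _ : Fin (k + 1) => stdGaussian E) 0).symm
  have hmeas : Measurable fun c : Fin (k + 1) → E => ((gram ℝ c)⁻¹ 0 0)⁻¹ :=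
    (measurable_inv_matrix_entry _ (fun i j => by simp only [gram_apply]; fun_prop) 0 0).inv
  rw [← hmp.map_eq, Measure.map_map hmeas hmp.measurable]
  refine map_prod_eq_of_ae _ _ _ _ (hmeas.comp hmp.measurable) ?_
  filter_upwards [ae_linearIndependent (E := E) k (by omega)] with g hg
  have hfin : Module.finrank ℝ (Submodule.span ℝ (Set.range g))ᗮ = d := by
    have h1 := finrank_span_eq_card hg
    have h2 := (Submodule.span ℝ (Set.range g)).finrank_add_finrank_orthogonal
    rw [Fintype.card_fin] at h1
    omega
  rw [← map_norm_sq_projection _ hfin]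
  congr 1
  ext h
  rw [← gram_inv_zero_zero h g hg]
  have hcons : (MeasurableEquiv.piFinSuccAbove (fun _ : Fin (k + 1) => E) 0).symm (h, g) =
      Fin.cons h g := by
    ext i
    refine Fin.cases ?_ (fun i => ?_) i <;> simp [MeasurableEquiv.piFinSuccAbove]
  simp only [Function.comp, hcons]

lemma measurePreserving_swap_pi {X ι κ : Type*} [MeasurableSpace X] [Fintype ι] [Fintype κ]
    (ν : Measure X) [IsProbabilityMeasure ν] :
    MeasurePreserving (fun (H : ι → κ → X) j i => H i j)
      (Measure.pi fun _ : ι => Measure.pi fun _ : κ => ν)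
      (Measure.pi fun _ : κ => Measure.pi fun _ : ι => ν) := by
  refine ⟨by fun_prop, ?_⟩
  have h1 := Measure.infinitePi_map_curry (ι := ι) (κ := κ) (fun _ _ => ν)
  have h2 := Measure.infinitePi_map_curry (ι := κ) (κ := ι) (fun _ _ => ν)
  have h3 := (measurePreserving_piCongrLeft (fun _ : κ × ι => ν) (Equiv.prodComm ι κ)).map_eq
  simp only [Measure.infinitePi_eq_pi] at h1 h2
  rw [← h1, ← h2, ← h3, Measure.map_map (by fun_prop) (by fun_prop),
    Measure.map_map (by fun_prop) (by fun_prop)]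
  congr 1

lemma measurePreserving_columns (n m : ℕ) :
    MeasurePreserving (fun (H : Fin n → Fin m → ℝ) j => WithLp.toLp 2 fun i => H i j)
      (Measure.pi fun _ : Fin n => Measure.pi fun _ : Fin m => gaussianReal 0 1)
      (Measure.pi fun _ : Fin m => stdGaussian (EuclideanSpace ℝ (Fin n))) :=
  (measurePreserving_pi _ _ (fun _ => ⟨by fun_prop, map_pi_eq_stdGaussian⟩)).comp
    (measurePreserving_swap_pi (gaussianReal 0 1))

/-- Vectors of equal Euclidean norm are related by an orthogonal matrix (a reflection), and
orthogonal matrices preserve the standard Gaussian law. -/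
lemma exists_orthogonal_mulVec_eq {m : ℕ} (a b : Fin m → ℝ) (hab : a ⬝ᵥ a = b ⬝ᵥ b) :
    ∃ Q : Matrix (Fin m) (Fin m) ℝ, Qᵀ * Q = 1 ∧ Q *ᵥ a = b ∧
      MeasurePreserving (fun x => Q *ᵥ x) (Measure.pi fun _ : Fin m => gaussianReal 0 1)
        (Measure.pi fun _ : Fin m => gaussianReal 0 1) := by
  have hnorm : ‖WithLp.toLp 2 a‖ = ‖WithLp.toLp 2 b‖ := by
    rw [← sq_eq_sq₀ (norm_nonneg _) (norm_nonneg _), EuclideanSpace.real_norm_sq_eq,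
      EuclideanSpace.real_norm_sq_eq]
    simpa [dotProduct, sq] using hab
  obtain ⟨e, he⟩ : ∃ e : EuclideanSpace ℝ (Fin m) ≃ₗᵢ[ℝ] EuclideanSpace ℝ (Fin m),
      e (WithLp.toLp 2 a) = WithLp.toLp 2 b :=
    ⟨_, Submodule.reflection_sub hnorm⟩
  let f : (Fin m → ℝ) →ₗ[ℝ] (Fin m → ℝ) :=
    (WithLp.linearEquiv 2 ℝ (Fin m → ℝ)).toLinearMap ∘ₗ e.toLinearEquiv.toLinearMap ∘ₗ
      (WithLp.linearEquiv 2 ℝ (Fin m → ℝ)).symm.toLinearMap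
  have hQ : ∀ x, LinearMap.toMatrix' f *ᵥ x = WithLp.ofLp (e (WithLp.toLp 2 x)) := by
    intro x
    rw [LinearMap.toMatrix'_mulVec]
    rfl
  refine ⟨LinearMap.toMatrix' f, ?_, ?_, ?_⟩
  · have hdot : ∀ x y, (LinearMap.toMatrix' f *ᵥ x) ⬝ᵥ (LinearMap.toMatrix' f *ᵥ y) = x ⬝ᵥ y := by
      intro x y
      have := e.inner_map_map (WithLp.toLp 2 y) (WithLp.toLp 2 x)
      rw [hQ, hQ]
      simpa only [EuclideanSpace.inner_eq_star_dotProduct, star_trivial] using this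
    ext i j
    have := hdot (Pi.single j 1) (Pi.single i 1)
    rw [dotProduct_mulVec, ← mulVec_transpose, mulVec_mulVec] at this
    simpa [one_apply, Pi.single_apply, eq_comm] using this
  · rw [hQ, he]
  · simp only [hQ]
    have h1 : MeasurePreserving (WithLp.toLp 2) (Measure.pi fun _ : Fin m => gaussianReal 0 1)
        (stdGaussian (EuclideanSpace ℝ (Fin m))) := ⟨by fun_prop, map_pi_eq_stdGaussian⟩
    have h2 : MeasurePreserving e (stdGaussian (EuclideanSpace ℝ (Fin m)))
        (stdGaussian (EuclideanSpace ℝ (Fin m))) := ⟨by fun_prop, stdGaussian_map e⟩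
    have h3 : MeasurePreserving WithLp.ofLp (stdGaussian (EuclideanSpace ℝ (Fin m)))
        (Measure.pi fun _ : Fin m => gaussianReal 0 1) := by
      refine ⟨by fun_prop, ?_⟩
      rw [← h1.map_eq, Measure.map_map (by fun_prop) (by fun_prop)]
      exact Measure.map_id
    exact h3.comp (h2.comp h1)

/-- The law of `P / (aᵀ (Hᵀ H)⁻¹ a)` depends on the size of `H` only through the difference `d`
between the number of rows and the number of columns less one. -/
lemma map_LB_eq {n k d : ℕ} (hn : k + d = n) (P : ℝ) (a : Fin (k + 1) → ℝ) :
    Measure.map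
      (fun H : Fin n → Fin (k + 1) → ℝ =>
        P / (a ⬝ᵥ (((Matrix.of H)ᵀ * Matrix.of H)⁻¹ *ᵥ a)))
      (Measure.pi fun _ : Fin n => Measure.pi fun _ : Fin (k + 1) => gaussianReal 0 1) =
    (stdGaussian (EuclideanSpace ℝ (Fin d))).map (fun x => P / ((a ⬝ᵥ a) * (‖x‖ ^ 2)⁻¹)) := by
  obtain ⟨Q, hQ, hQa, hQmp⟩ := exists_orthogonal_mulVec_eq a (Pi.single 0 √(a ⬝ᵥ a)) (by
    have : 0 ≤ a ⬝ᵥ a := Finset.sum_nonneg fun i _ => mul_self_nonneg (a i)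
    simp [Real.mul_self_sqrt this])
  have hQ' : Q * Qᵀ = 1 := mul_eq_one_comm.1 hQ
  have hcol := measurePreserving_columns n (k + 1)
  have hrot : MeasurePreserving (fun (H : Fin n → Fin (k + 1) → ℝ) i => Q *ᵥ H i)
      (Measure.pi fun _ : Fin n => Measure.pi fun _ : Fin (k + 1) => gaussianReal 0 1)
      (Measure.pi fun _ : Fin n => Measure.pi fun _ : Fin (k + 1) => gaussianReal 0 1) :=
    measurePreserving_pi _ _ (fun _ => hQmp)
  have hg := map_gram_inv (E := EuclideanSpace ℝ (Fin n)) (k := k) (d := d) (by simpa using hn)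
  have hmeas : Measurable fun c : Fin (k + 1) → EuclideanSpace ℝ (Fin n) =>
      ((gram ℝ c)⁻¹ 0 0)⁻¹ :=
    (measurable_inv_matrix_entry _ (fun i j => by simp only [gram_apply]; fun_prop) 0 0).inv
  have hR : (fun x : EuclideanSpace ℝ (Fin d) => P / ((a ⬝ᵥ a) * (‖x‖ ^ 2)⁻¹)) =
    (fun t : ℝ => P / ((a ⬝ᵥ a) * t⁻¹)) ∘ fun x => ‖x‖ ^ 2 := rfl
  rw [hR, ← Measure.map_map (by fun_prop) (by fun_prop), ← hg, ← hcol.map_eq,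
    Measure.map_map hmeas hcol.measurable, ← hrot.map_eq,
    Measure.map_map (hmeas.comp hcol.measurable) hrot.measurable,
    Measure.map_map (by fun_prop) ((hmeas.comp hcol.measurable).comp hrot.measurable),
    hrot.map_eq]
  congr 1
  ext H
  have hgram : gram ℝ (fun j => WithLp.toLp 2 fun i => (Q *ᵥ H i) j :
      Fin (k + 1) → EuclideanSpace ℝ (Fin n)) = Q * ((Matrix.of H)ᵀ * Matrix.of H) * Qᵀ := by
    have h1 : gram ℝ (fun j => WithLp.toLp 2 fun i => (Q *ᵥ H i) j :
      Fin (k + 1) → EuclideanSpace ℝ (Fin n)) = (Matrix.of H * Qᵀ)ᵀ * (Matrix.of H * Qᵀ) := by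
      ext i j
      simp [gram_apply, mul_apply, PiLp.inner_apply, mulVec, dotProduct, mul_comm]
    rw [h1, transpose_mul, transpose_transpose]
    simp only [Matrix.mul_assoc]
  have hinv : (Q * ((Matrix.of H)ᵀ * Matrix.of H) * Qᵀ)⁻¹ =
      Q * ((Matrix.of H)ᵀ * Matrix.of H)⁻¹ * Qᵀ := by
    rw [Matrix.mul_inv_rev, Matrix.mul_inv_rev, inv_eq_left_inv hQ, inv_eq_left_inv hQ',
      Matrix.mul_assoc]
  have ha : a = Qᵀ *ᵥ Pi.single 0 √(a ⬝ᵥ a) := by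
    rw [← hQa, mulVec_mulVec, hQ, one_mulVec]
  simp only [Function.comp]
  rw [hgram, hinv, inv_inv]
  congr 1
  set G := ((Matrix.of H)ᵀ * Matrix.of H)⁻¹
  have h2 : a ⬝ᵥ (G *ᵥ a) =
      Pi.single 0 √(a ⬝ᵥ a) ⬝ᵥ ((Q * G * Qᵀ) *ᵥ Pi.single 0 √(a ⬝ᵥ a)) := by
    rw [← mulVec_mulVec, ← ha, ← mulVec_mulVec, dotProduct_mulVec _ Q, ← mulVec_transpose, ← ha]
  rw [h2]
  have : 0 ≤ a ⬝ᵥ a := Finset.sum_nonneg fun i _ => mul_self_nonneg (a i)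
  simp
  rw [mul_left_comm, ← mul_assoc, Real.mul_self_sqrt this]

/-- **Channel reduction.** Let `2 ≤ M_T ≤ M_R` and `P > 0`.  Let `μ` be the
law of an `M_R × M_T` matrix with i.i.d. standard normal entries and `μ̃` that of an
`(M_R − M_T + 2) × 2` matrix with i.i.d. standard normal entries.  Let `ã ∈ ℝ²` be
nonzero and let `a ∈ ℝ^{M_T}` place the two entries of `ã` in two consecutive
coordinates (zeros elsewhere).  Then `H ↦ LB(H,a) = P/(aᵀ(HᵀH)⁻¹a)` under `μ` and
`H̃ ↦ LB(H̃,ã) = P/(ãᵀ(H̃ᵀH̃)⁻¹ã)` under `μ̃` are identically distributed. -/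
theorem LB_channel_reduction (MR MT : ℕ) (hMT : 2 ≤ MT) (hM : MT ≤ MR)
    (P : ℝ) (hP : 0 < P)
    (atil : Fin 2 → ℝ) (hatil : atil ≠ 0)
    (a : Fin MT → ℝ) (j : ℕ) (hj : j + 1 < MT)
    (ha : ∀ i : Fin MT, a i =
      if (i : ℕ) = j then atil 0 else if (i : ℕ) = j + 1 then atil 1 else 0) :
    Measure.map
      (fun H : Fin MR → Fin MT → ℝ =>
        P / (a ⬝ᵥ (((Matrix.of H)ᵀ * Matrix.of H)⁻¹ *ᵥ a)))
      (Measure.pi fun _ : Fin MR => Measure.pi fun _ : Fin MT => gaussianReal 0 1) =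
    Measure.map
      (fun H : Fin (MR - MT + 2) → Fin 2 → ℝ =>
        P / (atil ⬝ᵥ (((Matrix.of H)ᵀ * Matrix.of H)⁻¹ *ᵥ atil)))
      (Measure.pi fun _ : Fin (MR - MT + 2) => Measure.pi fun _ : Fin 2 =>
        gaussianReal 0 1) := by
  have hnorm : a ⬝ᵥ a = atil ⬝ᵥ atil := by
    have h : ∀ i : Fin MT, a i * a i =
        (if i = ⟨j, by omega⟩ then atil 0 * atil 0 else 0) +
          (if i = ⟨j + 1, hj⟩ then atil 1 * atil 1 else 0) := by
      intro i
      rw [ha]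
      by_cases h1 : (i : ℕ) = j
      · simp [h1, Fin.ext_iff]
      · by_cases h2 : (i : ℕ) = j + 1 <;> simp [h1, h2, Fin.ext_iff]
    simp [dotProduct, h, Finset.sum_add_distrib]
  obtain ⟨k, rfl⟩ : ∃ k, MT = k + 1 := ⟨MT - 1, by omega⟩
  rw [map_LB_eq (d := MR - (k + 1) + 1) (by omega) P a,
    map_LB_eq (k := 1) (d := MR - (k + 1) + 1) (by omega) P atil, hnorm]
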